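/- Let p > 3/2 and c > 0, and let (Δ_n)_{n≥1} be vectors in ℝ^d with ‖Δ_n‖₂ ≤ c·n^{−p} for all n ≥ 1. Define the probability distribution q on the positive integers by q(n) = n^{−(p+1/2)}/ζ(p+1/2), where ζ is the Riemann zeta function. Then the infinite-horizon single-sample randomized telescope estimator has finite expected compute ∑_{n=1}^∞ n·q(n) = ζ(p−1/2)/ζ(p+1/2) ≤ ζ(p−1/2)², and finite expected squared norm ∑_{n=1}^∞ ‖Δ_n‖₂²/q(n) ≤ c²·ζ(p+1/2)·ζ(p−1/2) ≤ c²·ζ(p−1/2)². -/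

import Mathlib

open Finset

/-!
Write `A = ζ(p - 1/2)` and `B = ζ(p + 1/2)`. Both exponents exceed `1`, so both are sums of the
positive series `∑ n^{-s}` (`hasSum_zeta_re`). Termwise, `n q(n) = n^{-(p-1/2)} / B` and
`‖Δ_n‖² / q(n) ≤ c² n^{-2p} n^{p+1/2} B = c² B n^{-(p-1/2)}`, so both series are controlled by the
series of `A`. The remaining inequalities follow from `1 ≤ B ≤ A`: the first term of each series
is `1`, and `n^{-s}` is decreasing in `s`.
-/

/-- The Dirichlet series of `ζ` at a real `s > 1`, as a real series indexed from `n + 1`. -/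
lemma hasSum_zeta_re (s : ℝ) (hs : 1 < s) :
    HasSum (fun n : ℕ => ((n + 1 : ℕ) : ℝ) ^ (-s)) (riemannZeta (s : ℂ)).re := by
  have hsum : Summable (fun n : ℕ => ((n + 1 : ℕ) : ℝ) ^ (-s)) :=
    (summable_nat_add_iff 1).2 (Real.summable_nat_rpow.2 (by linarith))
  have hz : riemannZeta (s : ℂ) = ((∑' n : ℕ, ((n + 1 : ℕ) : ℝ) ^ (-s) : ℝ) : ℂ) := by
    rw [zeta_eq_tsum_one_div_nat_add_one_cpow (by simpa using hs), Complex.ofReal_tsum]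
    refine tsum_congr fun n => ?_
    rw [Complex.ofReal_cpow (by positivity)]
    push_cast
    rw [Complex.cpow_neg, one_div]
  rw [hz, Complex.ofReal_re]
  exact hsum.hasSum

/-- **Horizon-agnostic compute and squared-norm bounds for RT-SS with polynomial sampling
(infinite-horizon version of Theorem 1).** For `p > 3/2`, `‖Δ_n‖ ≤ c n^{-p}`, and
`q(n) = n^{-(p+1/2)}/ζ(p+1/2)`, the expected compute equals `ζ(p-1/2)/ζ(p+1/2) ≤ ζ(p-1/2)²`
and the expected squared norm is at most `c² ζ(p+1/2) ζ(p-1/2) ≤ c² ζ(p-1/2)²`. -/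
theorem rtss_poly_infinite_horizon {d : ℕ} (hd : 0 < d)
    (p c : ℝ) (hp : 3 / 2 < p) (hc : 0 < c)
    (Δ : ℕ → EuclideanSpace ℝ (Fin d))
    (hΔ : ∀ n : ℕ, 1 ≤ n → ‖Δ n‖ ≤ c * (n : ℝ) ^ (-p))
    (q : ℕ → ℝ)
    (hq : ∀ n : ℕ, 1 ≤ n →
      q n = (n : ℝ) ^ (-(p + 1 / 2)) / (riemannZeta ((p : ℂ) + 1 / 2)).re) :
    Summable (fun n : ℕ => ((n + 1 : ℕ) : ℝ) * q (n + 1)) ∧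
    (∑' n : ℕ, ((n + 1 : ℕ) : ℝ) * q (n + 1))
      = (riemannZeta ((p : ℂ) - 1 / 2)).re / (riemannZeta ((p : ℂ) + 1 / 2)).re ∧
    (riemannZeta ((p : ℂ) - 1 / 2)).re / (riemannZeta ((p : ℂ) + 1 / 2)).re
      ≤ (riemannZeta ((p : ℂ) - 1 / 2)).re ^ 2 ∧
    Summable (fun n : ℕ => ‖Δ (n + 1)‖ ^ 2 / q (n + 1)) ∧
    (∑' n : ℕ, ‖Δ (n + 1)‖ ^ 2 / q (n + 1))
      ≤ c ^ 2 * (riemannZeta ((p : ℂ) + 1 / 2)).re * (riemannZeta ((p : ℂ) - 1 / 2)).re ∧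
    c ^ 2 * (riemannZeta ((p : ℂ) + 1 / 2)).re * (riemannZeta ((p : ℂ) - 1 / 2)).re
      ≤ c ^ 2 * (riemannZeta ((p : ℂ) - 1 / 2)).re ^ 2 := by
  have hA := hasSum_zeta_re (p - 1 / 2) (by linarith)
  have hB := hasSum_zeta_re (p + 1 / 2) (by linarith)
  push_cast at hA hB
  set A := (riemannZeta ((p : ℂ) - 1 / 2)).re
  set B := (riemannZeta ((p : ℂ) + 1 / 2)).re
  have hB1 : 1 ≤ B := by
    simpa using le_hasSum hB 0 fun n _ => by positivity
  have hBA : B ≤ A := hasSum_le (fun n => by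
    apply Real.rpow_le_rpow_of_exponent_le
    · have : (0 : ℝ) ≤ n := n.cast_nonneg
      linarith
    · linarith) hB hA
  have hB0 : 0 < B := by linarith
  have hcost : HasSum (fun n : ℕ => ((n + 1 : ℕ) : ℝ) * q (n + 1)) (A / B) := by
    refine (hA.div_const B).congr_fun fun n => ?_
    have hn : (0 : ℝ) < n + 1 := by positivity
    rw [hq (n + 1) (by omega)]
    push_cast
    rw [show -(p - 1 / 2) = 1 + -(p + 1 / 2) by ring, Real.rpow_add hn, Real.rpow_one]
    ring
  have hmaj := hA.mul_left (c ^ 2 * B)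
  have hq0 : ∀ n : ℕ, 0 < q (n + 1) := fun n => by
    rw [hq (n + 1) (by omega)]
    positivity
  have hle : ∀ n : ℕ, ‖Δ (n + 1)‖ ^ 2 / q (n + 1)
      ≤ c ^ 2 * B * ((n : ℝ) + 1) ^ (-(p - 1 / 2)) := fun n => by
    have hn : (0 : ℝ) < n + 1 := by positivity
    have h := hΔ (n + 1) (by omega)
    rw [div_le_iff₀ (hq0 n), hq (n + 1) (by omega)]
    push_cast at h ⊢
    calc ‖Δ (n + 1)‖ ^ 2 ≤ (c * ((n : ℝ) + 1) ^ (-p)) ^ 2 := by gcongr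
      _ = c ^ 2 * (((n : ℝ) + 1) ^ (-(p - 1 / 2)) * ((n : ℝ) + 1) ^ (-(p + 1 / 2))) := by
        rw [mul_pow, sq (((n : ℝ) + 1) ^ (-p)), ← Real.rpow_add hn, ← Real.rpow_add hn]
        ring_nf
      _ = _ := by field_simp
  have hsum : Summable (fun n : ℕ => ‖Δ (n + 1)‖ ^ 2 / q (n + 1)) :=
    Summable.of_nonneg_of_le (fun n => div_nonneg (sq_nonneg _) (hq0 n).le) hle hmaj.summable
  refine ⟨hcost.summable, hcost.tsum_eq, ?_, hsum, hasSum_le hle hsum.hasSum hmaj, ?_⟩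
  · calc A / B ≤ A := div_le_self (by linarith) hB1
      _ ≤ A ^ 2 := by nlinarith
  · rw [mul_assoc, sq A]
    gcongr
    linarith
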